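/- For every pair of points p, q ∈ SO(3) there exists a time optimal trajectory of (Σ) joining p to q: there is an admissible pair (γ,u) on some interval [a,b] with γ(a) = p, γ(b) = q, such that every admissible pair (γ',u') on [a',b'] with γ'(a') = p and γ'(b') = q satisfies b − a ≤ b' − a'. -/

import Mathlib

open Real MeasureTheory intervalIntegral Matrix

/-- The drift matrix `f = cos α · ![![0,1,0],![-1,0,0],![0,0,0]]`. -/
noncomputable def fM (α : ℝ) : Matrix (Fin 3) (Fin 3) ℝ :=
  Real.cos α • !![0,1,0; -1,0,0; 0,0,0]

/-- The controlled matrix `g = sin α · ![![0,0,0],![0,0,1],![0,-1,0]]`. -/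
noncomputable def gM (α : ℝ) : Matrix (Fin 3) (Fin 3) ℝ :=
  Real.sin α • !![0,0,0; 0,0,1; 0,-1,0]

/-- An admissible pair for `(Σ)` on `[a,b]`: a measurable control `u : [a,b] → [-1,1]`
together with an absolutely continuous curve `γ : [a,b] → SO(3)` solving
`γ' = γ·(f + u·g)` a.e. (expressed in integral form, entrywise). -/
structure AdmissiblePair (α a b : ℝ) (γ : ℝ → Matrix (Fin 3) (Fin 3) ℝ) (u : ℝ → ℝ) : Prop where
  hab : a ≤ b
  humeas : Measurable u
  hubound : ∀ t ∈ Set.Icc a b, |u t| ≤ 1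
  hso3 : ∀ t ∈ Set.Icc a b, γ t * (γ t).transpose = 1 ∧ (γ t).det = 1
  hcont : ContinuousOn γ (Set.Icc a b)
  hode : ∀ t ∈ Set.Icc a b, ∀ i j,
    γ t i j = γ a i j + ∫ s in a..t, (γ s * (fM α + u s • gM α)) i j

/-- Time optimality for `(Σ)`. -/
def TimeOptimal (α a b : ℝ) (γ : ℝ → Matrix (Fin 3) (Fin 3) ℝ) (u : ℝ → ℝ) : Prop :=
  AdmissiblePair α a b γ u ∧
  ∀ a' b' γ' u', AdmissiblePair α a' b' γ' u' →
    γ' a' = γ a → γ' b' = γ b → b - a ≤ b' - a'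

/-- `t` is a switching time of the control `u : [a,b] → [-1,1]`: in no neighbourhood of `t`
is `u` a.e. equal to a constant `c ∈ {-1,1}`. -/
def IsSwitching (a b : ℝ) (u : ℝ → ℝ) (t : ℝ) : Prop :=
  t ∈ Set.Icc a b ∧ ∀ ε > 0, ¬ ∃ c : ℝ, (c = 1 ∨ c = -1) ∧
    ∀ᵐ s ∂(volume.restrict (Set.Ioo (t - ε) (t + ε) ∩ Set.Icc a b)), u s = c

/-!
Existence: along a trajectory the error of one Euler step, computed from the primitive `v` of the
control, is at most quadratic in the step size. This bound passes to pointwise limits along an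
ultrafilter, and conversely it makes a curve a trajectory with control `v'`: both the curve and `v`
are Lipschitz, so the derivative exists almost everywhere and integrates back. The times needed to
go from `p` to `q` therefore form a set with a least element as soon as it is nonempty.

Controllability: the control `0` produces every rotation about the third axis, and the control `1` a
full turn about the axis tilted by `α`, which moves the third basis vector to every colatitude
between `0` and `2 * α`. In Euler angles these generate all of `SO(3)`.
-/

section ControlAffineSystem

open Set Filter Topology
open scoped NNReal

theorem integral_eq_sub_of_lipschitzOnWith_of_ae_hasDerivAt {E : Type*} [NormedAddCommGroup E]
    [NormedSpace ℝ E] [CompleteSpace E] {f f' : ℝ → E} {a b : ℝ} {L : ℝ≥0}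
    (hf : LipschitzOnWith L f (uIcc a b)) (hf' : IntervalIntegrable f' volume a b)
    (hderiv : ∀ᵐ x, x ∈ uIoc a b → HasDerivAt f (f' x) x) :
    ∫ x in a..b, f' x = f b - f a := by
  refine (SeparatingDual.eq_iff_forall_dual_eq (R := ℝ)).2 fun g => ?_
  have hgf : LipschitzOnWith (‖g‖₊ * L) (g ∘ f) (uIcc a b) := g.lipschitz.comp_lipschitzOnWith hf
  calc
    g (∫ x in a..b, f' x) = ∫ x in a..b, g (f' x) := (g.intervalIntegral_comp_comm hf').symm
    _ = ∫ x in a..b, deriv (g ∘ f) x :=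
      integral_congr_ae <| hderiv.mono fun x hx hxab =>
        (g.hasFDerivAt.comp_hasDerivAt x (hx hxab)).deriv.symm
    _ = g (f b) - g (f a) := hgf.absolutelyContinuousOnInterval.integral_deriv_eq_sub
    _ = g (f b - f a) := (map_sub g _ _).symm

/-- A control of the system: a measurable function with values in `[-1, 1]`. Controls are defined
on all of `ℝ`, so that their primitives are defined, and `1`-Lipschitz, on all of `ℝ`. -/
structure IsControl (u : ℝ → ℝ) : Prop where
  measurable : Measurable u
  abs_le_one : ∀ t, |u t| ≤ 1

namespace IsControl

variable {u v : ℝ → ℝ}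

theorem intervalIntegrable (hu : IsControl u) (a b : ℝ) : IntervalIntegrable u volume a b :=
  (intervalIntegrable_const (c := (1 : ℝ))).mono_fun hu.measurable.aestronglyMeasurable
    (ae_of_all _ fun t => by simpa using hu.abs_le_one t)

theorem lipschitzWith_integral (hu : IsControl u) (a : ℝ) :
    LipschitzWith 1 fun t => ∫ r in a..t, u r :=
  LipschitzWith.of_dist_le_mul fun t s => by
    rw [dist_eq_norm, integral_interval_sub_left (hu.intervalIntegrable a t)
      (hu.intervalIntegrable a s)]
    exact norm_integral_le_of_norm_le_const fun r _ => hu.abs_le_one r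

theorem comp_add_const (hu : IsControl u) (d : ℝ) : IsControl fun t => u (t + d) :=
  ⟨hu.measurable.comp (measurable_add_const d), fun t => hu.abs_le_one (t + d)⟩

theorem ite_le (hu : IsControl u) (hv : IsControl v) (b : ℝ) :
    IsControl fun t => if t ≤ b then u t else v t :=
  ⟨hu.measurable.ite measurableSet_Iic hv.measurable, fun t => by
    split_ifs
    exacts [hu.abs_le_one t, hv.abs_le_one t]⟩

end IsControl

theorem isControl_deriv {v : ℝ → ℝ} (hv : LipschitzWith 1 v) : IsControl (deriv v) :=
  ⟨measurable_deriv v, fun t => by simpa using norm_deriv_le_of_lipschitz hv (x₀ := t)⟩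

variable {E F : Type*} [NormedAddCommGroup E] [NormedSpace ℝ E] [NormedAddCommGroup F]
  [NormedSpace ℝ F] {X Y : E → E} {K : Set E} {X' Y' : F → F} {K' : Set F} {a b c T : ℝ}
  {γ δ : ℝ → E} {u v : ℝ → ℝ} {p q r : E}

/-- A trajectory on `[a, b]`, staying in `K`, of the control-affine system `x' = X x + u • Y x`,
the differential equation being expressed in integral form. -/
structure IsTrajectory (X Y : E → E) (K : Set E) (a b : ℝ) (γ : ℝ → E) (u : ℝ → ℝ) : Prop where
  le : a ≤ b
  isControl : IsControl u
  mapsTo : MapsTo γ (Icc a b) K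
  continuousOn : ContinuousOn γ (Icc a b)
  eq_add_integral : ∀ t ∈ Icc a b, γ t = γ a + ∫ s in a..t, (X (γ s) + u s • Y (γ s))

/-- `q` can be reached from `p` in time exactly `T` along a trajectory staying in `K`. -/
def ReachableIn (X Y : E → E) (K : Set E) (T : ℝ) (p q : E) : Prop :=
  ∃ γ u, IsTrajectory X Y K 0 T γ u ∧ γ 0 = p ∧ γ T = q

theorem intervalIntegrable_field (hX : ContinuousOn X K) (hY : ContinuousOn Y K)
    (hγ : ContinuousOn γ (uIcc a b)) (hγK : MapsTo γ (uIcc a b) K) (hu : IsControl u) :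
    IntervalIntegrable (fun t => X (γ t) + u t • Y (γ t)) volume a b :=
  (hX.comp hγ hγK).intervalIntegrable.add
    ((hu.intervalIntegrable a b).smul_continuousOn (hY.comp hγ hγK))

namespace IsTrajectory

theorem congr (h : IsTrajectory X Y K a b γ u) (hδ : EqOn δ γ (Icc a b)) (hv : IsControl v)
    (hvu : EqOn v u (Ioc a b)) : IsTrajectory X Y K a b δ v where
  le := h.le
  isControl := hv
  mapsTo := h.mapsTo.congr hδ.symm
  continuousOn := h.continuousOn.congr hδ
  eq_add_integral t ht := by
    rw [hδ ht, hδ ⟨le_rfl, h.le⟩, h.eq_add_integral t ht]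
    refine congrArg _ (integral_congr_ae (ae_of_all _ fun s hs => ?_))
    rw [uIoc_of_le ht.1] at hs
    have hsb : s ≤ b := hs.2.trans ht.2
    simp only [hδ ⟨hs.1.le, hsb⟩, hvu ⟨hs.1, hsb⟩]

theorem mono_right (h : IsTrajectory X Y K a b γ u) (hac : a ≤ c) (hcb : c ≤ b) :
    IsTrajectory X Y K a c γ u where
  le := hac
  isControl := h.isControl
  mapsTo := h.mapsTo.mono_left (Icc_subset_Icc_right hcb)
  continuousOn := h.continuousOn.mono (Icc_subset_Icc_right hcb)
  eq_add_integral t ht := h.eq_add_integral t ⟨ht.1, ht.2.trans hcb⟩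

theorem comp_add_const (h : IsTrajectory X Y K a b γ u) (d : ℝ) :
    IsTrajectory X Y K (a - d) (b - d) (fun t => γ (t + d)) fun t => u (t + d) := by
  have hd : MapsTo (· + d) (Icc (a - d) (b - d)) (Icc a b) := fun t ht =>
    ⟨sub_le_iff_le_add.1 ht.1, le_sub_iff_add_le.1 ht.2⟩
  refine ⟨sub_le_sub_right h.le d, h.isControl.comp_add_const d, h.mapsTo.comp hd,
    h.continuousOn.comp (by fun_prop) hd, fun t ht => ?_⟩
  rw [integral_comp_add_right (fun s => X (γ s) + u s • Y (γ s)), sub_add_cancel]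
  exact h.eq_add_integral _ (hd ht)

theorem reachableIn (h : IsTrajectory X Y K a b γ u) :
    ReachableIn X Y K (b - a) (γ a) (γ b) :=
  ⟨_, _, by simpa using h.comp_add_const a, by simp, by simp⟩

theorem intervalIntegrable (h : IsTrajectory X Y K a b γ u) (hX : ContinuousOn X K)
    (hY : ContinuousOn Y K) {s t : ℝ} (hs : s ∈ Icc a b) (ht : t ∈ Icc a b) :
    IntervalIntegrable (fun r => X (γ r) + u r • Y (γ r)) volume s t :=
  intervalIntegrable_field hX hY (h.continuousOn.mono (uIcc_subset_Icc hs ht))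
    (h.mapsTo.mono_left (uIcc_subset_Icc hs ht)) h.isControl

theorem sub_eq_integral (h : IsTrajectory X Y K a b γ u) (hX : ContinuousOn X K)
    (hY : ContinuousOn Y K) {s t : ℝ} (hs : s ∈ Icc a b) (ht : t ∈ Icc a b) :
    γ t - γ s = ∫ r in s..t, (X (γ r) + u r • Y (γ r)) := by
  have ha : a ∈ Icc a b := ⟨le_rfl, h.le⟩
  rw [h.eq_add_integral t ht, h.eq_add_integral s hs, add_sub_add_left_eq_sub,
    integral_interval_sub_left (h.intervalIntegrable hX hY ha ht)
      (h.intervalIntegrable hX hY ha hs)]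

theorem append (hX : ContinuousOn X K) (hY : ContinuousOn Y K)
    (hab : IsTrajectory X Y K a b γ u) (hbc : IsTrajectory X Y K b c γ u) :
    IsTrajectory X Y K a c γ u := by
  have hunion : Icc a b ∪ Icc b c = Icc a c := Icc_union_Icc_eq_Icc hab.le hbc.le
  refine ⟨hab.le.trans hbc.le, hab.isControl, hunion ▸ hab.mapsTo.union hbc.mapsTo, ?_,
    fun t ht => ?_⟩
  · exact hunion ▸ hab.continuousOn.union_of_isClosed hbc.continuousOn isClosed_Icc isClosed_Icc
  · rcases hunion.symm.subset ht with ht | ht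
    · exact hab.eq_add_integral t ht
    · have hb : b ∈ Icc a b := ⟨hab.le, le_rfl⟩
      rw [hbc.eq_add_integral t ht, hab.eq_add_integral b hb, add_assoc,
        integral_add_adjacent_intervals (hab.intervalIntegrable hX hY ⟨le_rfl, hab.le⟩ hb)
          (hbc.intervalIntegrable hX hY ⟨le_rfl, hbc.le⟩ ht)]

theorem map [CompleteSpace E] [CompleteSpace F] (h : IsTrajectory X Y K a b γ u)
    (hX : ContinuousOn X K) (hY : ContinuousOn Y K) (Φ : E →L[ℝ] F) (hK : MapsTo Φ K K')
    (hΦX : ∀ x, Φ (X x) = X' (Φ x)) (hΦY : ∀ x, Φ (Y x) = Y' (Φ x)) :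
    IsTrajectory X' Y' K' a b (Φ ∘ γ) u where
  le := h.le
  isControl := h.isControl
  mapsTo := hK.comp h.mapsTo
  continuousOn := Φ.continuous.comp_continuousOn h.continuousOn
  eq_add_integral t ht := by
    have hint := h.intervalIntegrable hX hY ⟨le_rfl, h.le⟩ ht
    simp only [Function.comp_apply, h.eq_add_integral t ht, map_add,
      ← Φ.intervalIntegral_comp_comm hint, map_smul, hΦX, hΦY]

end IsTrajectory

theorem isTrajectory_const_of_hasDerivAt [CompleteSpace E] (hX : ContinuousOn X K)
    (hY : ContinuousOn Y K) (hγK : ∀ t, γ t ∈ K) (hc : |c| ≤ 1)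
    (hγ : ∀ t, HasDerivAt γ (X (γ t) + c • Y (γ t)) t) (hab : a ≤ b) :
    IsTrajectory X Y K a b γ fun _ => c := by
  have hcont : Continuous γ := continuous_iff_continuousAt.2 fun t => (hγ t).continuousAt
  have hu : IsControl fun _ => c := ⟨measurable_const, fun _ => hc⟩
  refine ⟨hab, hu, fun t _ => hγK t, hcont.continuousOn, fun t _ => ?_⟩
  rw [integral_eq_sub_of_hasDerivAt (fun s _ => hγ s)
    (intervalIntegrable_field hX hY hcont.continuousOn (fun s _ => hγK s) hu), add_sub_cancel]

namespace ReachableIn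

theorem trans {S : ℝ} (hX : ContinuousOn X K) (hY : ContinuousOn Y K)
    (hpq : ReachableIn X Y K S p q) (hqr : ReachableIn X Y K T q r) :
    ReachableIn X Y K (S + T) p r := by
  obtain ⟨γ, u, hγ, rfl, rfl⟩ := hpq
  obtain ⟨δ, v, hδ, hδ0, rfl⟩ := hqr
  have hδ' : IsTrajectory X Y K S (S + T) (fun t => δ (t + -S)) fun t => v (t + -S) := by
    simpa [add_comm] using hδ.comp_add_const (-S)
  have hw := hγ.isControl.ite_le hδ'.isControl S
  have hη : EqOn (fun t => if t ≤ S then γ t else δ (t + -S)) (fun t => δ (t + -S))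
      (Icc S (S + T)) := fun t ht => by
    rcases ht.1.eq_or_lt with rfl | hlt
    · simp [hδ0]
    · simp [hlt.not_ge]
  refine ⟨fun t => if t ≤ S then γ t else δ (t + -S), _,
    .append hX hY (hγ.congr (fun t ht => if_pos ht.2) hw fun t ht => if_pos ht.2)
      (hδ'.congr hη hw fun t ht => if_neg ht.1.not_ge), if_pos hγ.le, ?_⟩
  simpa using hη ⟨hδ'.le, le_rfl⟩

theorem map [CompleteSpace E] [CompleteSpace F] (h : ReachableIn X Y K T p q)
    (hX : ContinuousOn X K) (hY : ContinuousOn Y K) (Φ : E →L[ℝ] F) (hK : MapsTo Φ K K')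
    (hΦX : ∀ x, Φ (X x) = X' (Φ x)) (hΦY : ∀ x, Φ (Y x) = Y' (Φ x)) :
    ReachableIn X' Y' K' T (Φ p) (Φ q) := by
  obtain ⟨γ, u, hγ, rfl, rfl⟩ := h
  exact ⟨Φ ∘ γ, u, hγ.map hX hY Φ hK hΦX hΦY, rfl, rfl⟩

end ReachableIn

/-- The quadratic bound for the error of one Euler step of the system `x' = X x + u • Y x` along
`γ`, where `v` is a primitive of the control `u`. It characterises trajectories without
mentioning derivatives or integrals, hence survives pointwise limits. -/
structure HasEulerEstimate (X Y : E → E) (L : ℝ≥0) (C : ℝ) (s : Set ℝ) (γ : ℝ → E) (v : ℝ → ℝ) :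
    Prop where
  lipschitzOnWith : LipschitzOnWith L γ s
  lipschitzWith : LipschitzWith 1 v
  norm_sub_le : ∀ t ∈ s, ∀ r ∈ s,
    ‖γ r - γ t - ((r - t) • X (γ t) + (v r - v t) • Y (γ t))‖ ≤ C * |r - t| ^ 2

section Estimate

variable {L LX LY M : ℝ≥0} {C : ℝ} {s : Set ℝ}

theorem IsTrajectory.lipschitzOnWith (h : IsTrajectory X Y K a b γ u) (hX : ContinuousOn X K)
    (hY : ContinuousOn Y K) (hM : ∀ x ∈ K, ∀ w : ℝ, |w| ≤ 1 → ‖X x + w • Y x‖ ≤ M) :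
    LipschitzOnWith M γ (Icc a b) :=
  LipschitzOnWith.of_dist_le_mul fun t ht s hs => by
    rw [dist_eq_norm, h.sub_eq_integral hX hY hs ht]
    exact norm_integral_le_of_norm_le_const fun r hr =>
      hM _ (h.mapsTo (uIcc_subset_Icc hs ht (uIoc_subset_uIcc hr))) _ (h.isControl.abs_le_one r)

theorem norm_field_sub_field_le (hX : LipschitzOnWith LX X K) (hY : LipschitzOnWith LY Y K)
    {x y : E} (hx : x ∈ K) (hy : y ∈ K) {w : ℝ} (hw : |w| ≤ 1) :
    ‖X x + w • Y x - (X y + w • Y y)‖ ≤ (LX + LY) * ‖x - y‖ :=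
  calc
    ‖X x + w • Y x - (X y + w • Y y)‖ = ‖X x - X y + w • (Y x - Y y)‖ := by
      rw [smul_sub, add_sub_add_comm]
    _ ≤ ‖X x - X y‖ + |w| * ‖Y x - Y y‖ := by
      simpa only [norm_smul, Real.norm_eq_abs] using norm_add_le (X x - X y) (w • (Y x - Y y))
    _ ≤ LX * ‖x - y‖ + 1 * (LY * ‖x - y‖) := by
      gcongr
      exacts [hX.norm_sub_le hx hy, hY.norm_sub_le hx hy]
    _ = (LX + LY) * ‖x - y‖ := by ring

theorem IsTrajectory.hasEulerEstimate [CompleteSpace E] (h : IsTrajectory X Y K a b γ u)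
    (hX : LipschitzOnWith LX X K) (hY : LipschitzOnWith LY Y K)
    (hM : ∀ x ∈ K, ∀ w : ℝ, |w| ≤ 1 → ‖X x + w • Y x‖ ≤ M) :
    HasEulerEstimate X Y M ((LX + LY) * M) (Icc a b) γ fun t => ∫ r in a..t, u r := by
  have hXc := hX.continuousOn
  have hYc := hY.continuousOn
  have hu := h.isControl
  refine ⟨h.lipschitzOnWith hXc hYc hM, hu.lipschitzWith_integral a, fun s hs t ht => ?_⟩
  have hstep : (t - s) • X (γ s) + ((∫ r in a..t, u r) - ∫ r in a..s, u r) • Y (γ s) =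
      ∫ r in s..t, (X (γ s) + u r • Y (γ s)) := by
    rw [integral_interval_sub_left (hu.intervalIntegrable a t) (hu.intervalIntegrable a s),
      intervalIntegral.integral_add intervalIntegrable_const
        ((hu.intervalIntegrable s t).smul_continuousOn continuousOn_const),
      intervalIntegral.integral_const, intervalIntegral.integral_smul_const]
  have hfrozen : IntervalIntegrable (fun r => X (γ s) + u r • Y (γ s)) volume s t :=
    intervalIntegrable_field hXc hYc continuousOn_const (fun _ _ => h.mapsTo hs) hu
  rw [hstep, h.sub_eq_integral hXc hYc hs ht,
    ← intervalIntegral.integral_sub (h.intervalIntegrable hXc hYc hs ht) hfrozen]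
  refine (intervalIntegral.norm_integral_le_of_norm_le_const (C := (LX + LY) * (M * |t - s|))
    fun r hr => ?_).trans_eq (by ring)
  have hrst : r ∈ uIcc s t := uIoc_subset_uIcc hr
  have hrab : r ∈ Icc a b := uIcc_subset_Icc hs ht hrst
  calc
    ‖X (γ r) + u r • Y (γ r) - (X (γ s) + u r • Y (γ s))‖ ≤ (LX + LY) * ‖γ r - γ s‖ :=
      norm_field_sub_field_le hX hY (h.mapsTo hrab) (h.mapsTo hs) (hu.abs_le_one r)
    _ ≤ (LX + LY) * (M * |t - s|) := by
      gcongr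
      refine ((h.lipschitzOnWith hXc hYc hM).norm_sub_le hrab hs).trans ?_
      gcongr
      exact abs_sub_left_of_mem_uIcc hrst

namespace HasEulerEstimate

theorem of_tendsto {ι : Type*} {l : Filter ι} [l.NeBot] {γ : ι → ℝ → E} {v : ι → ℝ → ℝ}
    {γ' : ℝ → E} {v' : ℝ → ℝ} (hX : ContinuousOn X K) (hY : ContinuousOn Y K)
    (h : ∀ n, HasEulerEstimate X Y L C s (γ n) (v n)) (hK : ∀ n, MapsTo (γ n) s K)
    (hK' : MapsTo γ' s K) (hγ : ∀ t ∈ s, Tendsto (fun n => γ n t) l (𝓝 (γ' t)))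
    (hv : ∀ t, Tendsto (fun n => v n t) l (𝓝 (v' t))) :
    HasEulerEstimate X Y L C s γ' v' := by
  have tendsto_comp : ∀ {Z : E → E}, ContinuousOn Z K → ∀ t ∈ s,
      Tendsto (fun n => Z (γ n t)) l (𝓝 (Z (γ' t))) := fun hZ t ht =>
    (hZ (γ' t) (hK' ht)).tendsto.comp
      (tendsto_nhdsWithin_iff.2 ⟨hγ t ht, .of_forall fun n => hK n ht⟩)
  refine ⟨.of_dist_le_mul fun t ht r hr => ?_, .of_dist_le_mul fun t r => ?_,
    fun t ht r hr => ?_⟩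
  · exact le_of_tendsto ((hγ t ht).dist (hγ r hr)) <| .of_forall fun n =>
      (h n).lipschitzOnWith.dist_le_mul t ht r hr
  · exact le_of_tendsto ((hv t).dist (hv r)) <| .of_forall fun n =>
      (h n).lipschitzWith.dist_le_mul t r
  · exact le_of_tendsto (((hγ r hr).sub (hγ t ht)).sub
      (((tendsto_comp hX t ht).const_smul (r - t)).add
        (((hv r).sub (hv t)).smul (tendsto_comp hY t ht)))).norm <|
      .of_forall fun n => (h n).norm_sub_le t ht r hr

theorem hasDerivAt (h : HasEulerEstimate X Y L C s γ v) {t : ℝ} (hs : s ∈ 𝓝 t)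
    (hv : DifferentiableAt ℝ v t) : HasDerivAt γ (X (γ t) + deriv v t • Y (γ t)) t := by
  have hstep : HasDerivAt (fun r => (r - t) • X (γ t) + (v r - v t) • Y (γ t))
      (X (γ t) + deriv v t • Y (γ t)) t := by
    simpa using (((hasDerivAt_id t).sub_const t).smul_const (X (γ t))).fun_add
      ((hv.hasDerivAt.sub_const (v t)).smul_const (Y (γ t)))
  have herror : HasDerivAt
      (fun r => γ r - γ t - ((r - t) • X (γ t) + (v r - v t) • Y (γ t))) 0 t := by
    have hbigO : (fun r => γ r - γ t - ((r - t) • X (γ t) + (v r - v t) • Y (γ t)))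
        =O[𝓝 t] fun r => ‖r - t‖ ^ 2 := by
      refine .of_bound C (mem_of_superset hs fun r hr => ?_)
      simpa using h.norm_sub_le t (mem_of_mem_nhds hs) r hr
    simpa [hasDerivAt_iff_isLittleO] using
      hbigO.trans_isLittleO (Asymptotics.isLittleO_pow_sub_sub t one_lt_two)
  simpa using (herror.fun_add hstep).add_const (γ t)

theorem isTrajectory [CompleteSpace E] (hX : ContinuousOn X K) (hY : ContinuousOn Y K)
    (h : HasEulerEstimate X Y L C (Icc a b) γ v) (hγK : MapsTo γ (Icc a b) K) (hab : a ≤ b) :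
    IsTrajectory X Y K a b γ (deriv v) := by
  have hu : IsControl (deriv v) := isControl_deriv h.lipschitzWith
  have hcont : ContinuousOn γ (Icc a b) := h.lipschitzOnWith.continuousOn
  refine ⟨hab, hu, hγK, hcont, fun t ht => ?_⟩
  have hsub : uIcc a t ⊆ Icc a b := uIcc_subset_Icc ⟨le_rfl, hab⟩ ht
  rw [integral_eq_sub_of_lipschitzOnWith_of_ae_hasDerivAt (h.lipschitzOnWith.mono hsub)
    (intervalIntegrable_field hX hY (hcont.mono hsub) (hγK.mono_left hsub) hu), add_sub_cancel]
  filter_upwards [h.lipschitzWith.ae_differentiableAt_real, volume.ae_ne t] with r hr hrt hrat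
  rw [uIoc_of_le ht.1] at hrat
  exact h.hasDerivAt (Icc_mem_nhds hrat.1 ((hrat.2.lt_of_ne hrt).trans_le ht.2)) hr

end HasEulerEstimate

end Estimate

theorem exists_tendsto_of_isCompact {ι α : Type*} [TopologicalSpace α] {K : Set α}
    (hK : IsCompact K) (l : Ultrafilter ι) {x : ι → α} (hx : ∀ n, x n ∈ K) :
    ∃ y ∈ K, Tendsto x l (𝓝 y) :=
  hK.ultrafilter_le_nhds' (l.map x) (Ultrafilter.mem_map.2 (univ_mem' hx))

theorem exists_bound_field (hK : IsCompact K) (hX : ContinuousOn X K) (hY : ContinuousOn Y K) :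
    ∃ M : ℝ≥0, ∀ x ∈ K, ∀ w : ℝ, |w| ≤ 1 → ‖X x + w • Y x‖ ≤ M := by
  have hbound : IsCompact ((fun z : E × ℝ => X z.1 + z.2 • Y z.1) '' K ×ˢ Icc (-1) 1) := by
    refine (hK.prod isCompact_Icc).image_of_continuousOn ?_
    have hfst : MapsTo Prod.fst (K ×ˢ Icc (-1 : ℝ) 1) K := fun z hz => hz.1
    exact (hX.comp continuousOn_fst hfst).add
      (continuousOn_snd.smul (hY.comp continuousOn_fst hfst))
  obtain ⟨M, hM⟩ := hbound.isBounded.exists_norm_le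
  exact ⟨M.toNNReal, fun x hx w hw =>
    (hM _ ⟨(x, w), ⟨hx, abs_le.1 hw⟩, rfl⟩).trans (le_coe_toNNReal M)⟩

section Existence

variable [CompleteSpace E] {LX LY : ℝ≥0}

theorem reachableIn_of_tendsto (hK : IsCompact K) (hX : LipschitzOnWith LX X K)
    (hY : LipschitzOnWith LY Y K) {τ : ℕ → ℝ} (h : ∀ n, ReachableIn X Y K (τ n) p q)
    (hτ : Tendsto τ atTop (𝓝 T)) (hle : ∀ n, T ≤ τ n) (hT : 0 ≤ T) :
    ReachableIn X Y K T p q := by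
  choose γ u hγ h0 hend using h
  obtain ⟨M, hM⟩ := exists_bound_field hK hX.continuousOn hY.continuousOn
  have hγT n : IsTrajectory X Y K 0 T (γ n) (u n) := (hγ n).mono_right hT (hle n)
  have hlip n := (hγ n).lipschitzOnWith hX.continuousOn hY.continuousOn hM
  choose! δ hδK hδ using fun t (ht : t ∈ Icc 0 T) =>
    exists_tendsto_of_isCompact hK (hyperfilter ℕ) fun n => (hγT n).mapsTo ht
  choose v _ hv using fun t =>
    exists_tendsto_of_isCompact (isCompact_closedBall (0 : ℝ) |t|) (hyperfilter ℕ)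
      (x := fun n => ∫ r in (0 : ℝ)..t, u n r) fun n => by
        simpa using ((hγ n).isControl.lipschitzWith_integral 0).dist_le_mul t 0
  have hδE := HasEulerEstimate.of_tendsto hX.continuousOn hY.continuousOn
    (fun n => (hγT n).hasEulerEstimate hX hY hM) (fun n => (hγT n).mapsTo) hδK hδ hv
  refine ⟨δ, _, hδE.isTrajectory hX.continuousOn hY.continuousOn hδK hT, ?_, ?_⟩
  · exact tendsto_nhds_unique (hδ 0 ⟨le_rfl, hT⟩) (by simp only [h0, tendsto_const_nhds])
  · refine tendsto_nhds_unique (hδ T ⟨hT, le_rfl⟩)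
      (Tendsto.mono_left ?_ Nat.hyperfilter_le_atTop)
    have hsmall : Tendsto (fun n => M * dist T (τ n)) atTop (𝓝 0) := by
      simpa using ((tendsto_const_nhds (x := T)).dist hτ).const_mul (M : ℝ)
    refine tendsto_iff_dist_tendsto_zero.2
      (squeeze_zero (fun _ => dist_nonneg) (fun n => ?_) hsmall)
    simpa only [hend] using
      (hlip n).dist_le_mul T ⟨hT, hle n⟩ (τ n) ⟨hT.trans (hle n), le_rfl⟩

theorem exists_isLeast_reachableIn (hK : IsCompact K) (hX : LipschitzOnWith LX X K)
    (hY : LipschitzOnWith LY Y K) (h : ∃ T, ReachableIn X Y K T p q) :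
    ∃ T, IsLeast {T | ReachableIn X Y K T p q} T := by
  have hpos : ∀ T ∈ {T | ReachableIn X Y K T p q}, 0 ≤ T := fun _ ⟨_, _, hγ, _⟩ => hγ.le
  have hbdd : BddBelow {T | ReachableIn X Y K T p q} := ⟨0, hpos⟩
  obtain ⟨τ, -, hτ, hmem⟩ := exists_seq_tendsto_sInf h hbdd
  exact ⟨_, reachableIn_of_tendsto hK hX hY hmem hτ (fun n => csInf_le hbdd (hmem n))
    (le_csInf h hpos), fun T hT => csInf_le hbdd hT⟩

end Existence

end ControlAffineSystem

section LeftInvariantSystem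

theorem lipschitzWith_mul_const {A : Type*} [NonUnitalSeminormedRing A] (x : A) :
    LipschitzWith ‖x‖₊ (· * x) :=
  LipschitzWith.of_dist_le_mul fun y z => by
    simpa only [dist_eq_norm, ← sub_mul, coe_nnnorm, mul_comm ‖x‖] using norm_mul_le (y - z) x

variable {A : Type*} [NormedRing A] [NormedAlgebra ℝ A] [CompleteSpace A]
  {f g : A} {S : Submonoid A} {T : ℝ} {p q r : A}

theorem ReachableIn.mul_left (h : ReachableIn (· * f) (· * g) S T p q) (hr : r ∈ S) :
    ReachableIn (· * f) (· * g) S T (r * p) (r * q) :=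
  h.map (lipschitzWith_mul_const f).continuous.continuousOn
    (lipschitzWith_mul_const g).continuous.continuousOn (ContinuousLinearMap.mul ℝ A r)
    (fun _ hx => S.mul_mem hr hx) (fun x => (mul_assoc r x f).symm) fun x => (mul_assoc r x g).symm

/-- The points reachable from `1` along trajectories in `S` of the left-invariant system
`x' = x * (f + u • g)`. They form a monoid because left translations permute the trajectories. -/
def reachableSubmonoid (f g : A) (S : Submonoid A) : Submonoid A where
  carrier := {x | ∃ T, ReachableIn (· * f) (· * g) S T 1 x}
  one_mem' := by
    refine ⟨0, fun _ => 1, fun _ => 0, ⟨le_rfl, ⟨measurable_const, by simp⟩,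
      fun _ _ => S.one_mem, continuousOn_const, fun t ht => ?_⟩, rfl, rfl⟩
    simp [le_antisymm ht.2 ht.1]
  mul_mem' := by
    rintro x y ⟨T₁, h₁⟩ ⟨T₂, h₂⟩
    have hx : x ∈ S := by
      obtain ⟨γ, u, hγ, -, rfl⟩ := h₁
      exact hγ.mapsTo ⟨hγ.le, le_rfl⟩
    exact ⟨T₁ + T₂, h₁.trans (lipschitzWith_mul_const f).continuous.continuousOn
      (lipschitzWith_mul_const g).continuous.continuousOn (by simpa using h₂.mul_left hx)⟩

theorem mem_reachableSubmonoid_of_hasDerivAt {E : ℝ → A} {c t : ℝ} (hE0 : E 0 = 1)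
    (hE : ∀ t, E t ∈ S) (hderiv : ∀ t, HasDerivAt E (E t * (f + c • g)) t) (hc : |c| ≤ 1)
    (ht : 0 ≤ t) : E t ∈ reachableSubmonoid f g S :=
  ⟨t, E, _, isTrajectory_const_of_hasDerivAt
    (lipschitzWith_mul_const f).continuous.continuousOn
    (lipschitzWith_mul_const g).continuous.continuousOn hE hc
    (fun t => by simpa only [mul_add, mul_smul_comm] using hderiv t) ht, hE0, rfl⟩

end LeftInvariantSystem

section Rotations

open Set

section SpecialOrthogonalGroup

variable {n R : Type*} [Fintype n] [DecidableEq n] [CommRing R] {A : Matrix n n R}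

theorem mem_specialOrthogonalGroup_iff_mul_transpose :
    A ∈ specialOrthogonalGroup n R ↔ A * Aᵀ = 1 ∧ A.det = 1 := by
  rw [mem_specialOrthogonalGroup_iff, mem_orthogonalGroup_iff]

theorem transpose_mem_specialOrthogonalGroup (hA : A ∈ specialOrthogonalGroup n R) :
    Aᵀ ∈ specialOrthogonalGroup n R := by
  rw [mem_specialOrthogonalGroup_iff_mul_transpose] at hA ⊢
  rw [transpose_transpose, det_transpose]
  exact ⟨mul_eq_one_comm.1 hA.1, hA.2⟩

variable (n) in
theorem isCompact_specialOrthogonalGroup :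
    IsCompact (specialOrthogonalGroup n ℝ : Set (Matrix n n ℝ)) := by
  have hSO : (specialOrthogonalGroup n ℝ : Set (Matrix n n ℝ)) = {A | A * Aᵀ = 1 ∧ A.det = 1} :=
    Set.ext fun _ => mem_specialOrthogonalGroup_iff_mul_transpose
  have hclosed : IsClosed {A : Matrix n n ℝ | A * Aᵀ = 1 ∧ A.det = 1} :=
    (isClosed_eq (by fun_prop) continuous_const).inter (isClosed_eq (by fun_prop) continuous_const)
  rw [hSO]
  refine (isCompact_Icc (a := (-1 : ℝ)) (b := 1)).matrix.of_isClosed_subset hclosed ?_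
  intro A hA i j
  have hunitary : A ∈ unitaryGroup n ℝ := by
    rw [mem_unitaryGroup_iff, star_eq_conjTranspose, conjTranspose_eq_transpose_of_trivial, hA.1]
  exact abs_le.1 (entry_norm_bound_of_unitary hunitary i j)

end SpecialOrthogonalGroup

/-- The rotation `exp (θ J)`, where `J = !![0, 1, 0; -1, 0, 0; 0, 0, 0]` is the direction of the
drift matrix `fM`. -/
noncomputable def rotZ (θ : ℝ) : Matrix (Fin 3) (Fin 3) ℝ :=
  !![cos θ, sin θ, 0; -sin θ, cos θ, 0; 0, 0, 1]

/-- The rotation by `β` about the second axis. -/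
noncomputable def rotY (β : ℝ) : Matrix (Fin 3) (Fin 3) ℝ :=
  !![cos β, 0, sin β; 0, 1, 0; -sin β, 0, cos β]

theorem rotZ_zero : rotZ 0 = 1 := by
  simp [rotZ, one_fin_three]

theorem rotY_zero : rotY 0 = 1 := by
  simp [rotY, one_fin_three]

theorem rotZ_add (θ φ : ℝ) : rotZ (θ + φ) = rotZ θ * rotZ φ := by
  simp only [rotZ, mul_fin_three, sin_add, cos_add]
  ring_nf

theorem rotY_add (β γ : ℝ) : rotY (β + γ) = rotY β * rotY γ := by
  simp only [rotY, mul_fin_three, sin_add, cos_add]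
  ring_nf

theorem rotZ_neg_mul_rotZ (θ : ℝ) : rotZ (-θ) * rotZ θ = 1 := by
  rw [← rotZ_add, neg_add_cancel, rotZ_zero]

theorem rotZ_mul_rotZ_neg (θ : ℝ) : rotZ θ * rotZ (-θ) = 1 := by
  rw [← rotZ_add, add_neg_cancel, rotZ_zero]

theorem rotY_mul_rotY_neg (β : ℝ) : rotY β * rotY (-β) = 1 := by
  rw [← rotY_add, add_neg_cancel, rotY_zero]

theorem rotY_neg_mul_rotY (β : ℝ) : rotY (-β) * rotY β = 1 := by
  rw [← rotY_add, neg_add_cancel, rotY_zero]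

theorem rotY_nat_mul (n : ℕ) (β : ℝ) : rotY (n * β) = rotY β ^ n := by
  induction n with
  | zero => simp [rotY_zero]
  | succ n ih => rw [Nat.cast_succ, add_one_mul, rotY_add, ih, pow_succ]

theorem periodic_rotZ : Function.Periodic rotZ (2 * π) := fun θ => by
  simp only [rotZ, cos_add_two_pi, sin_add_two_pi]

theorem rotZ_mem_specialOrthogonalGroup (θ : ℝ) : rotZ θ ∈ specialOrthogonalGroup (Fin 3) ℝ := by
  refine mem_specialOrthogonalGroup_iff_mul_transpose.2 ⟨?_, ?_⟩
  · have htranspose : (rotZ θ)ᵀ = rotZ (-θ) := by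
      ext i j
      fin_cases i <;> fin_cases j <;> simp [rotZ]
    rw [htranspose, rotZ_mul_rotZ_neg]
  · simp [rotZ, det_fin_three, ← sq]

theorem rotY_mem_specialOrthogonalGroup (β : ℝ) : rotY β ∈ specialOrthogonalGroup (Fin 3) ℝ := by
  refine mem_specialOrthogonalGroup_iff_mul_transpose.2 ⟨?_, ?_⟩
  · have htranspose : (rotY β)ᵀ = rotY (-β) := by
      ext i j
      fin_cases i <;> fin_cases j <;> simp [rotY]
    rw [htranspose, rotY_mul_rotY_neg]
  · simp [rotY, det_fin_three, ← sq]

open scoped Matrix.Norms.Operator in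
theorem hasDerivAt_rotZ (θ : ℝ) : HasDerivAt rotZ (rotZ θ * !![0, 1, 0; -1, 0, 0; 0, 0, 0]) θ := by
  refine hasDerivAt_pi.2 fun i => hasDerivAt_pi.2 fun j => ?_
  fin_cases i <;> fin_cases j <;>
    simp [rotZ, mul_apply, Fin.sum_univ_three, hasDerivAt_const, hasDerivAt_sin, hasDerivAt_cos,
      (hasDerivAt_sin θ).fun_neg]

section EulerAngles

variable {s : Matrix (Fin 3) (Fin 3) ℝ}

theorem sq_add_sq_add_sq_row (hs : s ∈ specialOrthogonalGroup (Fin 3) ℝ) (i : Fin 3) :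
    s i 0 ^ 2 + s i 1 ^ 2 + s i 2 ^ 2 = 1 := by
  have h := congrFun₂ (mem_specialOrthogonalGroup_iff_mul_transpose.1 hs).1 i i
  simpa [mul_apply, Fin.sum_univ_three, ← sq] using h

theorem sq_add_sq_add_sq_col (hs : s ∈ specialOrthogonalGroup (Fin 3) ℝ) (j : Fin 3) :
    s 0 j ^ 2 + s 1 j ^ 2 + s 2 j ^ 2 = 1 :=
  sq_add_sq_add_sq_row (transpose_mem_specialOrthogonalGroup hs) j

theorem exists_polar (x y : ℝ) :
    ∃ θ, √(x ^ 2 + y ^ 2) * cos θ = x ∧ √(x ^ 2 + y ^ 2) * sin θ = y := by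
  have hnorm : ‖(⟨x, y⟩ : ℂ)‖ = √(x ^ 2 + y ^ 2) := Complex.norm_eq_sqrt_sq_add_sq _
  exact ⟨Complex.arg ⟨x, y⟩, by rw [← hnorm, Complex.norm_mul_cos_arg],
    by rw [← hnorm, Complex.norm_mul_sin_arg]⟩

theorem exists_eq_rotZ (hs : s ∈ specialOrthogonalGroup (Fin 3) ℝ) (h : s 2 2 = 1) :
    ∃ θ, s = rotZ θ := by
  have hcol := sq_add_sq_add_sq_col hs
  have hrow := sq_add_sq_add_sq_row hs 2
  have h02 : s 0 2 = 0 := by nlinarith [hcol 2]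
  have h12 : s 1 2 = 0 := by nlinarith [hcol 2]
  have h20 : s 2 0 = 0 := by nlinarith
  have h21 : s 2 1 = 0 := by nlinarith
  have hdet : s 0 0 * s 1 1 - s 0 1 * s 1 0 = 1 := by
    simpa [det_fin_three, h, h02, h12] using
      (mem_specialOrthogonalGroup_iff_mul_transpose.1 hs).2
  have hconformal : (s 0 0 - s 1 1) ^ 2 + (s 0 1 + s 1 0) ^ 2 = 0 := by
    have h0 := hcol 0
    have h1 := hcol 1
    rw [h20] at h0
    rw [h21] at h1
    linear_combination h0 + h1 - 2 * hdet
  have h11 : s 1 1 = s 0 0 := by nlinarith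
  have h10 : s 1 0 = -s 0 1 := by nlinarith
  obtain ⟨θ, hcos, hsin⟩ := exists_polar (s 0 0) (s 0 1)
  have hunit : s 0 0 ^ 2 + s 0 1 ^ 2 = 1 := by linear_combination hdet - s 0 0 * h11 + s 0 1 * h10
  rw [hunit, sqrt_one, one_mul] at hcos hsin
  refine ⟨θ, ?_⟩
  ext i j
  fin_cases i <;> fin_cases j <;> simp [rotZ, *]

theorem exists_eq_rotZ_mul_rotY_mul_rotZ (hs : s ∈ specialOrthogonalGroup (Fin 3) ℝ) :
    ∃ φ ψ, s = rotZ φ * rotY (arccos (s 2 2)) * rotZ ψ := by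
  have hcol := sq_add_sq_add_sq_col hs 2
  set β := arccos (s 2 2) with hβ
  have hcos : cos β = s 2 2 := cos_arccos (by nlinarith) (by nlinarith)
  obtain ⟨φ, hx, hy⟩ := exists_polar (s 0 2) (-s 1 2)
  have hsin : √(s 0 2 ^ 2 + (-s 1 2) ^ 2) = sin β := by
    rw [hβ, sin_arccos, ← hcol]
    ring_nf
  rw [hsin] at hx hy
  have hmem : rotY (-β) * (rotZ (-φ) * s) ∈ specialOrthogonalGroup (Fin 3) ℝ :=
    mul_mem (rotY_mem_specialOrthogonalGroup _) (mul_mem (rotZ_mem_specialOrthogonalGroup _) hs)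
  obtain ⟨ψ, hψ⟩ := exists_eq_rotZ hmem <| by
    simp only [rotY, rotZ, mul_apply, Fin.sum_univ_three, of_apply, cons_val, cos_neg, sin_neg]
    linear_combination sin_sq_add_cos_sq β + sin β ^ 2 * sin_sq_add_cos_sq φ
      - cos φ * sin β * hx - sin φ * sin β * hy - cos β * hcos
  refine ⟨φ, ψ, ?_⟩
  calc
    s = rotZ φ * (rotY β * rotY (-β)) * (rotZ (-φ) * s) := by
      rw [rotY_mul_rotY_neg, mul_one, ← mul_assoc, rotZ_mul_rotZ_neg, one_mul]
    _ = rotZ φ * rotY β * rotZ ψ := by rw [← hψ]; simp only [mul_assoc]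

theorem rotY_arccos_mem_iff {H : Submonoid (Matrix (Fin 3) (Fin 3) ℝ)} (hH : ∀ θ, rotZ θ ∈ H)
    (hs : s ∈ specialOrthogonalGroup (Fin 3) ℝ) : rotY (arccos (s 2 2)) ∈ H ↔ s ∈ H := by
  obtain ⟨φ, ψ, hφψ⟩ := exists_eq_rotZ_mul_rotY_mul_rotZ hs
  constructor <;> intro h
  · rw [hφψ]
    exact mul_mem (mul_mem (hH φ) h) (hH ψ)
  · have hY : rotY (arccos (s 2 2)) = rotZ (-φ) * s * rotZ (-ψ) := by
      nth_rw 2 [hφψ]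
      simp only [mul_assoc, rotZ_mul_rotZ_neg, mul_one]
      rw [← mul_assoc, rotZ_neg_mul_rotZ, one_mul]
    rw [hY]
    exact mul_mem (mul_mem (hH _) h) (hH _)

end EulerAngles

end Rotations

section Controllability

open Set
open scoped Matrix.Norms.Operator

variable {α a b : ℝ} {γ : ℝ → Matrix (Fin 3) (Fin 3) ℝ} {u : ℝ → ℝ}
  {p q : Matrix (Fin 3) (Fin 3) ℝ}

theorem continuousOn_mul_const (x : Matrix (Fin 3) (Fin 3) ℝ)
    (K : Set (Matrix (Fin 3) (Fin 3) ℝ)) : ContinuousOn (· * x) K :=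
  (lipschitzWith_mul_const x).continuous.continuousOn

theorem intervalIntegral_field_apply (hγ : ContinuousOn γ (uIcc a b))
    (hK : MapsTo γ (uIcc a b) (specialOrthogonalGroup (Fin 3) ℝ)) (hu : IsControl u) (i j : Fin 3) :
    (∫ r in a..b, (γ r * fM α + u r • (γ r * gM α))) i j =
      ∫ r in a..b, (γ r * (fM α + u r • gM α)) i j := by
  have hint := intervalIntegrable_field (continuousOn_mul_const (fM α) _)
    (continuousOn_mul_const (gM α) _) hγ hK hu
  simp only [Matrix.mul_add, Matrix.mul_smul]
  exact ((entryLinearMap ℝ ℝ i j).toContinuousLinearMap.intervalIntegral_comp_comm hint).symm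

-- An admissible control is bounded on `[a, b]` only, hence the indicator function.
theorem AdmissiblePair.isTrajectory (h : AdmissiblePair α a b γ u) :
    IsTrajectory (· * fM α) (· * gM α) (specialOrthogonalGroup (Fin 3) ℝ) a b γ
      ((Icc a b).indicator u) := by
  have hu : IsControl ((Icc a b).indicator u) := by
    refine ⟨h.humeas.indicator measurableSet_Icc, fun t => ?_⟩
    by_cases ht : t ∈ Icc a b
    · simpa [ht] using h.hubound t ht
    · simp [ht]
  have hK : MapsTo γ (Icc a b) (specialOrthogonalGroup (Fin 3) ℝ) := fun t ht =>
    mem_specialOrthogonalGroup_iff_mul_transpose.2 (h.hso3 t ht)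
  refine ⟨h.hab, hu, hK, h.hcont, fun t ht => ?_⟩
  have hsub : uIcc a t ⊆ Icc a b := uIcc_subset_Icc ⟨le_rfl, h.hab⟩ ht
  ext i j
  rw [Matrix.add_apply, intervalIntegral_field_apply (h.hcont.mono hsub) (hK.mono_left hsub) hu,
    h.hode t ht i j]
  congr 1
  refine intervalIntegral.integral_congr fun r hr => ?_
  simp only [indicator_of_mem (hsub hr)]

theorem AdmissiblePair.reachableIn (h : AdmissiblePair α a b γ u) :
    ReachableIn (· * fM α) (· * gM α) (specialOrthogonalGroup (Fin 3) ℝ) (b - a) (γ a) (γ b) :=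
  h.isTrajectory.reachableIn

theorem IsTrajectory.admissiblePair
    (h : IsTrajectory (· * fM α) (· * gM α) (specialOrthogonalGroup (Fin 3) ℝ) a b γ u) :
    AdmissiblePair α a b γ u where
  hab := h.le
  humeas := h.isControl.measurable
  hubound t _ := h.isControl.abs_le_one t
  hso3 t ht := mem_specialOrthogonalGroup_iff_mul_transpose.1 (h.mapsTo ht)
  hcont := h.continuousOn
  hode t ht i j := by
    have hsub : uIcc a t ⊆ Icc a b := uIcc_subset_Icc ⟨le_rfl, h.le⟩ ht
    rw [← intervalIntegral_field_apply (h.continuousOn.mono hsub) (h.mapsTo.mono_left hsub)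
      h.isControl, ← Matrix.add_apply, ← h.eq_add_integral t ht]

/-- The rotations that trajectories of the system `(Σ)` issued from the identity can reach. -/
noncomputable def reachableRotations (α : ℝ) : Submonoid (Matrix (Fin 3) (Fin 3) ℝ) :=
  reachableSubmonoid (fM α) (gM α) (specialOrthogonalGroup (Fin 3) ℝ)

theorem rotZ_mem_reachableRotations (hα : 0 < cos α) (θ : ℝ) : rotZ θ ∈ reachableRotations α := by
  have hderiv (t : ℝ) : HasDerivAt (fun t => rotZ (cos α * t))
      (rotZ (cos α * t) * (fM α + (0 : ℝ) • gM α)) t := by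
    refine ((hasDerivAt_rotZ _).scomp t ((hasDerivAt_id t).const_mul (cos α))).congr_deriv ?_
    rw [mul_one, zero_smul, add_zero, fM, Matrix.mul_smul, id_eq]
  have hmem {t : ℝ} (ht : 0 ≤ t) : rotZ (cos α * t) ∈ reachableRotations α :=
    mem_reachableSubmonoid_of_hasDerivAt (E := fun t => rotZ (cos α * t)) (by simp [rotZ_zero])
      (fun t => rotZ_mem_specialOrthogonalGroup _) hderiv (by simp) ht
  obtain ⟨φ, hφ, hθφ⟩ := periodic_rotZ.exists_mem_Ico₀ two_pi_pos θ
  simpa [hθφ, mul_div_cancel₀ _ hα.ne'] using hmem (div_nonneg hφ.1 hα.le)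

theorem rotY_conj_eq_fM_add_gM (α : ℝ) :
    rotY α * !![0, 1, 0; -1, 0, 0; 0, 0, 0] * rotY (-α) = fM α + (1 : ℝ) • gM α := by
  ext i j
  fin_cases i <;> fin_cases j <;> simp [rotY, fM, gM, mul_apply, Fin.sum_univ_three]

theorem rotY_conj_rotZ_mem_reachableRotations {t : ℝ} (ht : 0 ≤ t) :
    rotY α * rotZ t * rotY (-α) ∈ reachableRotations α := by
  have hderiv (t : ℝ) : HasDerivAt (fun t => rotY α * rotZ t * rotY (-α))
      (rotY α * rotZ t * rotY (-α) * (fM α + (1 : ℝ) • gM α)) t := by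
    refine (((hasDerivAt_rotZ t).const_mul (rotY α)).mul_const (rotY (-α))).congr_deriv ?_
    rw [← rotY_conj_eq_fM_add_gM]
    simp only [← mul_assoc]
    rw [mul_assoc _ _ (rotY α), rotY_neg_mul_rotY, mul_one]
  exact mem_reachableSubmonoid_of_hasDerivAt (E := fun t => rotY α * rotZ t * rotY (-α))
    (by simp [rotZ_zero, rotY_mul_rotY_neg])
    (fun t => mul_mem (mul_mem (rotY_mem_specialOrthogonalGroup _)
      (rotZ_mem_specialOrthogonalGroup _)) (rotY_mem_specialOrthogonalGroup _))
    hderiv (by simp) ht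

theorem rotY_conj_rotZ_apply_two_two (α t : ℝ) :
    (rotY α * rotZ t * rotY (-α)) 2 2 = cos α ^ 2 + sin α ^ 2 * cos t := by
  simp only [rotY, rotZ, mul_apply, Fin.sum_univ_three, of_apply, cons_val, cos_neg, sin_neg]
  ring

theorem exists_cos_eq_cos_sq_add_sin_sq_mul_cos {β : ℝ} (hα : sin α ≠ 0) (hα' : 2 * α ≤ π)
    (hβ : 0 ≤ β) (hβα : β ≤ 2 * α) :
    ∃ t, 0 ≤ t ∧ cos α ^ 2 + sin α ^ 2 * cos t = cos β := by
  have hsq : 0 < sin α ^ 2 := by positivity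
  have hcos : 1 - 2 * sin α ^ 2 ≤ cos β :=
    calc
      1 - 2 * sin α ^ 2 = cos (2 * α) := by rw [cos_two_mul, cos_sq']; ring
      _ ≤ cos β := cos_le_cos_of_nonneg_of_le_pi hβ hα' hβα
  refine ⟨arccos (1 - (1 - cos β) / sin α ^ 2), arccos_nonneg _, ?_⟩
  have hle : (1 - cos β) / sin α ^ 2 ≤ 2 := (div_le_iff₀ hsq).2 (by linarith)
  have hnonneg : 0 ≤ (1 - cos β) / sin α ^ 2 := div_nonneg (by linarith [cos_le_one β]) hsq.le
  rw [cos_arccos (by linarith) (by linarith), cos_sq']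
  field_simp
  ring

theorem rotY_mem_reachableRotations_of_le (hα : α ∈ Ioo 0 (π / 2)) {β : ℝ} (hβ : 0 ≤ β)
    (hβα : β ≤ 2 * α) : rotY β ∈ reachableRotations α := by
  have hα' : 2 * α ≤ π := by linarith [hα.2]
  have hsin : 0 < sin α := sin_pos_of_pos_of_lt_pi hα.1 (by linarith [hα.1])
  have hcos : 0 < cos α := cos_pos_of_mem_Ioo ⟨by linarith [hα.1, pi_pos], hα.2⟩
  obtain ⟨t, ht, htβ⟩ := exists_cos_eq_cos_sq_add_sin_sq_mul_cos hsin.ne' hα' hβ hβα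
  have hreach := rotY_conj_rotZ_mem_reachableRotations (α := α) ht
  have hSO : rotY α * rotZ t * rotY (-α) ∈ specialOrthogonalGroup (Fin 3) ℝ :=
    mul_mem (mul_mem (rotY_mem_specialOrthogonalGroup _) (rotZ_mem_specialOrthogonalGroup _))
      (rotY_mem_specialOrthogonalGroup _)
  have hY := (rotY_arccos_mem_iff (rotZ_mem_reachableRotations hcos) hSO).2 hreach
  rwa [rotY_conj_rotZ_apply_two_two, htβ, arccos_cos hβ (hβα.trans hα')] at hY

theorem rotY_mem_reachableRotations (hα : α ∈ Ioo 0 (π / 2)) {β : ℝ} (hβ : 0 ≤ β) :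
    rotY β ∈ reachableRotations α := by
  obtain ⟨n, hn⟩ := exists_nat_gt (β / (2 * α))
  have hα2 : 0 < 2 * α := by linarith [hα.1]
  have hn0 : (0 : ℝ) < n := (div_nonneg hβ hα2.le).trans_lt hn
  have hstep : β / n ≤ 2 * α := by
    rw [div_le_iff₀ hn0, mul_comm]
    exact ((div_lt_iff₀ hα2).1 hn).le
  rw [← mul_div_cancel₀ β hn0.ne', rotY_nat_mul]
  exact pow_mem (rotY_mem_reachableRotations_of_le hα (by positivity) hstep) n

theorem reachableIn_specialOrthogonalGroup (hα : α ∈ Ioo 0 (π / 2))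
    (hp : p ∈ specialOrthogonalGroup (Fin 3) ℝ) (hq : q ∈ specialOrthogonalGroup (Fin 3) ℝ) :
    ∃ T, ReachableIn (· * fM α) (· * gM α) (specialOrthogonalGroup (Fin 3) ℝ) T p q := by
  have hcos : 0 < cos α := cos_pos_of_mem_Ioo ⟨by linarith [hα.1, pi_pos], hα.2⟩
  obtain ⟨T, hT⟩ : pᵀ * q ∈ reachableRotations α :=
    (rotY_arccos_mem_iff (rotZ_mem_reachableRotations hcos)
      (mul_mem (transpose_mem_specialOrthogonalGroup hp) hq)).1
      (rotY_mem_reachableRotations hα (arccos_nonneg _))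
  have hpp : p * pᵀ = 1 := (mem_specialOrthogonalGroup_iff_mul_transpose.1 hp).1
  exact ⟨T, by simpa [← mul_assoc, hpp] using hT.mul_left hp⟩

theorem exists_isLeast_reachableIn_specialOrthogonalGroup (hα : α ∈ Ioo 0 (π / 2))
    (hp : p ∈ specialOrthogonalGroup (Fin 3) ℝ) (hq : q ∈ specialOrthogonalGroup (Fin 3) ℝ) :
    ∃ T, IsLeast {T | ReachableIn (· * fM α) (· * gM α) (specialOrthogonalGroup (Fin 3) ℝ) T p q}
      T :=
  exists_isLeast_reachableIn (isCompact_specialOrthogonalGroup _)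
    (lipschitzWith_mul_const _).lipschitzOnWith (lipschitzWith_mul_const _).lipschitzOnWith
    (reachableIn_specialOrthogonalGroup hα hp hq)

end Controllability

/-- For every pair of points of `SO(3)` there exists a time optimal trajectory of `(Σ)`
joining them. -/
theorem exists_time_optimal (α : ℝ) (hα : α ∈ Set.Ioo 0 (π / 2))
    (p q : Matrix (Fin 3) (Fin 3) ℝ)
    (hp : p * p.transpose = 1 ∧ p.det = 1) (hq : q * q.transpose = 1 ∧ q.det = 1) :
    ∃ a b γ u, AdmissiblePair α a b γ u ∧ γ a = p ∧ γ b = q ∧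
      ∀ a' b' γ' u', AdmissiblePair α a' b' γ' u' →
        γ' a' = p → γ' b' = q → b - a ≤ b' - a' := by
  obtain ⟨T, ⟨γ, u, hγ, hγ0, hγT⟩, hmin⟩ := exists_isLeast_reachableIn_specialOrthogonalGroup hα
    (mem_specialOrthogonalGroup_iff_mul_transpose.2 hp)
    (mem_specialOrthogonalGroup_iff_mul_transpose.2 hq)
  refine ⟨0, T, γ, u, hγ.admissiblePair, hγ0, hγT, ?_⟩
  rintro a b δ v hδ rfl rfl
  simpa using hmin hδ.reachableIn
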